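/- For the 3×3×3 tensor with Ω = {(1,1,1),(1,3,1),(2,1,1),(3,2,1),(3,1,2),(2,2,3),(3,3,3)} and observations Q_{111} = −1, Q_{131} = 1, Q_{211} = 1, Q_{321} = 1, Q_{312} = 1, Q_{223} = 1, Q_{333} = 1, there exists no real rank-one completion a_i b_j c_k = Q_{ijk}, but there exists a complex one, e.g. a = (1, −1, 𝔦), b = (1, 𝔦, −1), c = (−1, −𝔦, 𝔦). -/

import Mathlib

open Complex

/-- Table 4: no real rank-one completion exists, but a complex one does. -/
theorem table4_no_real_but_complex
    : (¬ ∃ a b c : Fin 3 → ℝ,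
        a 0 * b 0 * c 0 = -1 ∧
        a 0 * b 2 * c 0 = 1 ∧
        a 1 * b 0 * c 0 = 1 ∧
        a 2 * b 1 * c 0 = 1 ∧
        a 2 * b 0 * c 1 = 1 ∧
        a 1 * b 1 * c 2 = 1 ∧
        a 2 * b 2 * c 2 = 1) ∧
      (let a : Fin 3 → ℂ := ![1, -1, Complex.I];
        let b : Fin 3 → ℂ := ![1, Complex.I, -1];
        let c : Fin 3 → ℂ := ![-1, -Complex.I, Complex.I];
        a 0 * b 0 * c 0 = -1 ∧
        a 0 * b 2 * c 0 = 1 ∧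
        a 1 * b 0 * c 0 = 1 ∧
        a 2 * b 1 * c 0 = 1 ∧
        a 2 * b 0 * c 1 = 1 ∧
        a 1 * b 1 * c 2 = 1 ∧
        a 2 * b 2 * c 2 = 1) := by
  constructor
  · rintro ⟨a, b, c, h1, h2, h3, h4, -, h6, h7⟩
    have key : (a 1 * b 1 * c 2) * (a 2 * b 2 * c 2) * (a 0 * b 0 * c 0) * c 0 ^ 2
        = (a 1 * b 0 * c 0) * (a 0 * b 2 * c 0) * (a 2 * b 1 * c 0) * c 2 ^ 2 := by ring
    rw [h1, h2, h3, h4, h6, h7] at key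
    have h0 : c 0 = 0 := by
      have : c 0 ^ 2 = 0 := by nlinarith [sq_nonneg (c 0), sq_nonneg (c 2)]
      exact pow_eq_zero_iff (two_ne_zero) |>.mp this
    rw [h0] at h4
    norm_num at h4
  · simp
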